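/- arXiv:2404.06093 — 3 statements merged into one kernel-verified Lean document; each statement's English description precedes it below -/
import Mathlib

section
/- Let α, β ∈ (0,1) with β > α, and for each n set θ_n = (Φ⁻¹(1−α) − Φ⁻¹(1−β))/√(n σ²) (which lies in (0,1] for n large enough). Let Q_n be the law of an i.i.d. sample X_1, …, X_n with density (1−θ_n) f⁰ + θ_n f¹. Then Q_n(S_n(𝕏) ≥ √(σ²)·Φ⁻¹(1−α)/√n) converges to β as n → ∞; in particular the test has asymptotic power β against these local alternatives. -/
open MeasureTheory ProbabilityTheory Filter Finset
open scoped ENNReal NNReal Classical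

noncomputable section

/-- `f` is a probability density on `[0,1]^d` with respect to Lebesgue measure. -/
def IsDensityOn (d : ℕ) (f : (Fin d → ℝ) → ℝ) : Prop :=
  Measurable f ∧ (∀ x, 0 ≤ f x) ∧ (∀ x ∉ Set.Icc (0 : Fin d → ℝ) 1, f x = 0) ∧
    (∫ x, f x) = 1

/-- The law on `(Fin d → ℝ)` with Lebesgue density `f`. -/
def densityMeasure (d : ℕ) (f : (Fin d → ℝ) → ℝ) : Measure (Fin d → ℝ) :=
  MeasureTheory.volume.withDensity fun x => ENNReal.ofReal (f x)

/-!
Put `X = f¹ / f⁰ - 1`, which is centred with variance `σ²` under `f⁰`. The mixture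
`(1 - θ) f⁰ + θ f¹` is the density `1 + θ X` relative to `f⁰`, so the characteristic function of `X`
under the mixture is `φ - θ i φ'`, where `φ` is the characteristic function of `X` under `f⁰`.
For `θ = a / √n`, the Taylor expansions `φ s = 1 - σ² s² / 2 + o(s²)` and `φ' s = -σ² s + o(s)` at
`s = t / √n` give `1 + (i t a σ² - σ² t² / 2) / n + o(1 / n)`, whose `n`-th power converges to the
characteristic function of the Gaussian law of mean `a σ²` and variance `σ²`. Lévy's theorem then
yields the limit of the rejection probability.
-/

open scoped Topology

section WithDensity

variable {Ω : Type*} [MeasurableSpace Ω] {μ : Measure Ω} {f : Ω → ℝ}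

lemma isProbabilityMeasure_withDensity_ofReal (hf : 0 ≤ᵐ[μ] f) (hf_one : ∫ x, f x ∂μ = 1) :
    IsProbabilityMeasure (μ.withDensity fun x => ENNReal.ofReal (f x)) := by
  have hint : Integrable f μ := .of_integral_ne_zero (by simp [hf_one])
  refine ⟨?_⟩
  rw [withDensity_apply _ .univ, Measure.restrict_univ,
    ← ofReal_integral_eq_lintegral_ofReal hint hf, hf_one, ENNReal.ofReal_one]

lemma integral_withDensity_ofReal {E : Type*} [NormedAddCommGroup E] [NormedSpace ℝ E]
    (hf_meas : AEMeasurable f μ) (hf : 0 ≤ᵐ[μ] f) (F : Ω → E) :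
    ∫ x, F x ∂(μ.withDensity fun x => ENNReal.ofReal (f x)) = ∫ x, f x • F x ∂μ := by
  rw [integral_withDensity_eq_integral_toReal_smul₀ hf_meas.ennreal_ofReal
    (ae_of_all _ fun _ => ENNReal.ofReal_lt_top)]
  refine integral_congr_ae ?_
  filter_upwards [hf] with x hx
  rw [ENNReal.toReal_ofReal hx]

end WithDensity

section CharFun

lemma charFun_map_pi_const_mul_sum {ι Ω : Type*} [Fintype ι] [MeasurableSpace Ω] {μ : Measure Ω}
    [IsProbabilityMeasure μ] {X : Ω → ℝ} (hX : Measurable X) (r t : ℝ) :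
    charFun ((Measure.pi fun _ : ι => μ).map fun ω => r * ∑ i, X (ω i)) t =
      charFun (μ.map X) (r * t) ^ Fintype.card ι := by
  have : IsProbabilityMeasure (μ.map X) := Measure.isProbabilityMeasure_map hX.aemeasurable
  have hsum : (Measure.pi fun _ : ι => μ).map (fun ω => ∑ i, X (ω i)) =
      (Measure.pi fun _ : ι => μ.map X).map fun x => ∑ i, x i := by
    rw [← Measure.pi_map_pi fun _ => hX.aemeasurable, Measure.map_map (by fun_prop) (by fun_prop)]
    rfl
  rw [charFun_map_mul_comp (by fun_prop : Measurable fun ω : ι → Ω => ∑ i, X (ω i)).aemeasurable,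
    hsum, charFun_map_sum_pi_eq_prod]
  simp

lemma tendsto_measure_of_tendsto_charFun {E : Type*} [NormedAddCommGroup E]
    [InnerProductSpace ℝ E] [FiniteDimensional ℝ E] [MeasurableSpace E] [BorelSpace E]
    {μ : ℕ → Measure E} {ν : Measure E} [IsProbabilityMeasure ν]
    (hμ : ∀ᶠ n in atTop, IsProbabilityMeasure (μ n))
    (h : ∀ t, Tendsto (fun n => charFun (μ n) t) atTop (𝓝 (charFun ν t))) {s : Set E}
    (hs : ν (frontier s) = 0) : Tendsto (fun n => μ n s) atTop (𝓝 (ν s)) := by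
  obtain ⟨N, hN⟩ := eventually_atTop.1 hμ
  let μ' (n : ℕ) : ProbabilityMeasure E := ⟨μ (n + N), hN _ (Nat.le_add_left N n)⟩
  have hlim : Tendsto μ' atTop (𝓝 (⟨ν, inferInstance⟩ : ProbabilityMeasure E)) :=
    ProbabilityMeasure.tendsto_of_tendsto_charFun fun t => (tendsto_add_atTop_iff_nat N).2 (h t)
  exact (tendsto_add_atTop_iff_nat (f := fun n => μ n s) N).1
    (ProbabilityMeasure.tendsto_measure_of_null_frontier_of_tendsto' hlim hs)

lemma deriv_charFun_map {Ω : Type*} [MeasurableSpace Ω] {μ : Measure Ω} [IsFiniteMeasure μ]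
    {X : Ω → ℝ} (hX : Integrable X μ) (s : ℝ) :
    deriv (charFun (μ.map X)) s =
      Complex.I * ∫ x, X x * Complex.exp (s * X x * Complex.I) ∂μ := by
  have hid : MemLp id 1 (μ.map X) :=
    (memLp_map_measure_iff (by fun_prop) hX.aemeasurable).2 (memLp_one_iff_integrable.2 hX)
  rw [← iteratedDeriv_one, iteratedDeriv_charFun (by exact_mod_cast hid),
    integral_map hX.aemeasurable (by fun_prop)]
  simp

variable {ν : Measure ℝ} [IsProbabilityMeasure ν] {v : ℝ}

lemma isLittleO_charFun_sub (hν : MemLp id 2 ν) (hmean : ∫ x, x ∂ν = 0)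
    (hvar : ∫ x, x ^ 2 ∂ν = v) :
    (fun s : ℝ => charFun ν s - (1 - v * s ^ 2 / 2)) =o[𝓝 0] fun s => s ^ 2 := by
  have htaylor (s : ℝ) :
      taylorWithinEval (charFun ν) 2 Set.univ 0 s = 1 - v * s ^ 2 / 2 := by
    rw [taylorWithinEval_charFun_zero hν]
    simp [Finset.sum_range_succ, hmean, hvar, mul_pow]
    ring
  simpa only [htaylor, sub_zero] using
    taylor_isLittleO_univ (x₀ := (0 : ℝ)) (contDiff_charFun (n := 2) hν)

lemma isLittleO_deriv_charFun_add (hν : MemLp id 2 ν) (hmean : ∫ x, x ∂ν = 0)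
    (hvar : ∫ x, x ^ 2 ∂ν = v) :
    (fun s : ℝ => deriv (charFun ν) s + v * s) =o[𝓝 0] fun s => s := by
  have hderiv_zero : deriv (charFun ν) 0 = 0 := by
    rw [← iteratedDeriv_one, iteratedDeriv_charFun_zero (hν.mono_exponent (by norm_num))]
    simp [hmean]
  have hderiv2_zero : deriv (deriv (charFun ν)) 0 = -v := by
    rw [← iteratedDeriv_one, ← iteratedDeriv_succ', iteratedDeriv_charFun_zero hν]
    simp [hvar]
  have hdiff : DifferentiableAt ℝ (deriv (charFun ν)) 0 := by
    have := (contDiff_charFun (n := 2) hν).differentiable_iteratedDeriv 1 (by norm_num)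
    simpa using this 0
  have := hasDerivAt_iff_isLittleO_nhds_zero.1 hdiff.hasDerivAt
  simpa [hderiv_zero, hderiv2_zero, mul_comm] using this

lemma tendsto_charFun_sub_deriv_pow (hν : MemLp id 2 ν) (hmean : ∫ x, x ∂ν = 0)
    (hvar : ∫ x, x ^ 2 ∂ν = v) (a t : ℝ) :
    Tendsto (fun n : ℕ => (charFun ν ((√n)⁻¹ * t) -
        (a / √n : ℝ) * Complex.I * deriv (charFun ν) ((√n)⁻¹ * t)) ^ n)
      atTop (𝓝 (Complex.exp (t * (a * v) * Complex.I - v * t ^ 2 / 2))) := by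
  refine Complex.tendsto_pow_exp_of_isLittleO_sub_add_div _ ?_
  let r (n : ℕ) : ℝ := (√n)⁻¹
  have hr_sq (n : ℕ) : r n ^ 2 = 1 / n := by
    rw [inv_pow, Real.sq_sqrt n.cast_nonneg, one_div]
  have hs : Tendsto (fun n => r n * t) atTop (𝓝 0) := by
    simpa using (tendsto_inv_atTop_zero.comp
      (Real.tendsto_sqrt_atTop.comp tendsto_natCast_atTop_atTop)).mul_const t
  have hs_isBigO : (fun n => r n * t) =O[atTop] r := by
    simpa only [mul_comm] using Asymptotics.isBigO_const_mul_self t r atTop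
  have hfun := ((isLittleO_charFun_sub hν hmean hvar).comp_tendsto hs).trans_isBigO
    (hs_isBigO.pow 2)
  have hderiv := ((isLittleO_deriv_charFun_add hν hmean hvar).comp_tendsto hs).trans_isBigO
    hs_isBigO
  have htilt : (fun n => a * Complex.I * (r n : ℂ)) =O[atTop] r :=
    .const_mul_left (Asymptotics.isBigO_of_le _ fun n => by simp) _
  have hsum := hfun.sub ((htilt.mul_isLittleO hderiv).congr_right fun n => (sq (r n)).symm)
  refine (hsum.trans_isBigO (Asymptotics.isBigO_of_le _ fun n => ?_)).congr_left fun n => ?_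
  · simp [hr_sq]
  · have hr_sq' : (√n : ℂ)⁻¹ ^ 2 = (n : ℂ)⁻¹ := by
      rw [← Complex.ofReal_inv, ← Complex.ofReal_pow, hr_sq]
      simp
    simp only [Function.comp_apply, r, div_eq_mul_inv, Complex.ofReal_mul, Complex.ofReal_inv]
    linear_combination (v * t ^ 2 / 2 - t * (a * v) * Complex.I) * hr_sq'

end CharFun

section Gaussian

lemma gaussianReal_Ici (m c : ℝ) {v : ℝ≥0} (hv : v ≠ 0) :
    gaussianReal m v (Set.Ici c) = gaussianReal 0 1 (Set.Ici ((c - m) / √v)) := by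
  have hsqrt : 0 < √(v : ℝ) := by positivity
  have hvar : NNReal.mk (√v ^ 2) (sq_nonneg _) * 1 = v := by
    ext
    simp
  have hmap : gaussianReal m v = (gaussianReal 0 1).map fun x => m + √v * x := by
    have := congrArg (Measure.map (m + ·)) (gaussianReal_map_const_mul (μ := 0) (v := 1) √v)
    rw [Measure.map_map (by fun_prop) (by fun_prop), gaussianReal_map_const_add, hvar] at this
    simpa [Function.comp_def] using this.symm
  rw [hmap, Measure.map_apply (by fun_prop) measurableSet_Ici]
  congr 1 with x
  simp only [Set.mem_preimage, Set.mem_Ici, div_le_iff₀ hsqrt, sub_le_iff_le_add']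
  rw [mul_comm]

lemma gaussianReal_real_Ici_of_Iic {m q b : ℝ} {v : ℝ≥0} (hv : v ≠ 0) (hb : b ≤ 1)
    (hq : gaussianReal m v (Set.Iic q) = ENNReal.ofReal (1 - b)) :
    (gaussianReal m v).real (Set.Ici q) = b := by
  have := nullSingletonClass_gaussianReal (μ := m) hv
  rw [measureReal_congr Ioi_ae_eq_Ici.symm, ← Set.compl_Iic,
    probReal_compl_eq_one_sub measurableSet_Iic, measureReal_def, hq,
    ENNReal.toReal_ofReal (by linarith)]
  ring

lemma le_of_measure_Iic_eq_ofReal {ν : Measure ℝ} {p q a b : ℝ} (hab : a < b) (hb : b ≤ 1)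
    (hp : ν (Set.Iic p) = ENNReal.ofReal (1 - a)) (hq : ν (Set.Iic q) = ENNReal.ofReal (1 - b)) :
    q ≤ p := by
  by_contra! hpq
  have := measure_mono (μ := ν) (Set.Iic_subset_Iic.2 hpq.le)
  rw [hp, hq, ENNReal.ofReal_le_ofReal_iff (by linarith)] at this
  linarith

end Gaussian

section AffineTilt

variable {Ω : Type*} [MeasurableSpace Ω] {P : Measure Ω} {X : Ω → ℝ}

/-- The measure with density `1 + b X` relative to `P`: the law at parameter `b` of the affine path
through `P` with score `X`. Negative values of `1 + b X` are truncated to `0`. -/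
def affineTilt (P : Measure Ω) (X : Ω → ℝ) (b : ℝ) : Measure Ω :=
  P.withDensity fun x => ENNReal.ofReal (1 + b * X x)

lemma isProbabilityMeasure_affineTilt [IsProbabilityMeasure P] (hX : Integrable X P)
    (hmean : ∫ x, X x ∂P = 0) {b : ℝ} (hb : ∀ᵐ x ∂P, 0 ≤ 1 + b * X x) :
    IsProbabilityMeasure (affineTilt P X b) := by
  refine isProbabilityMeasure_withDensity_ofReal hb ?_
  rw [integral_add (integrable_const 1) (hX.const_mul b), integral_const_mul, hmean]
  simp

lemma charFun_map_affineTilt [IsFiniteMeasure P] (hX : Integrable X P) {b : ℝ}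
    (hb : ∀ᵐ x ∂P, 0 ≤ 1 + b * X x) (s : ℝ) :
    charFun ((affineTilt P X b).map X) s =
      charFun (P.map X) s - b * Complex.I * deriv (charFun (P.map X)) s := by
  have hXm : AEMeasurable X P := hX.aemeasurable
  have hX_tilt : AEMeasurable X (affineTilt P X b) :=
    hXm.mono_ac (withDensity_absolutelyContinuous _ _)
  have hbdd (x : Ω) : ‖Complex.exp (s * X x * Complex.I)‖ ≤ 1 := by
    rw [← Complex.ofReal_mul, Complex.norm_exp_ofReal_mul_I]
  have hexp : Integrable (fun x => Complex.exp (s * X x * Complex.I)) P :=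
    .of_bound (by fun_prop) 1 (ae_of_all _ hbdd)
  have hXexp : Integrable (fun x => X x * Complex.exp (s * X x * Complex.I)) P :=
    hX.ofReal.mul_bdd (c := 1) (by fun_prop) (ae_of_all _ hbdd)
  rw [deriv_charFun_map hX, charFun_apply_real, charFun_apply_real,
    integral_map hX_tilt (by fun_prop), integral_map hXm (by fun_prop), affineTilt,
    integral_withDensity_ofReal (by fun_prop) hb]
  calc ∫ x, (1 + b * X x) • Complex.exp (s * X x * Complex.I) ∂P
      = ∫ x, (Complex.exp (s * X x * Complex.I) +
          b * (X x * Complex.exp (s * X x * Complex.I))) ∂P := by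
        congr with x
        rw [Complex.real_smul]
        push_cast
        ring
    _ = _ := by
        rw [integral_add hexp (hXexp.const_mul _), integral_const_mul]
        linear_combination (b * ∫ x, X x * Complex.exp (s * X x * Complex.I) ∂P) *
          Complex.I_mul_I

lemma eventually_nonneg_one_add_div_sqrt_mul {a c : ℝ} (ha : 0 ≤ a) (hc : ∀ᵐ x ∂P, c ≤ X x) :
    ∀ᶠ n : ℕ in atTop, ∀ᵐ x ∂P, 0 ≤ 1 + a / √n * X x := by
  have hlim : Tendsto (fun n : ℕ => a / √n * c) atTop (𝓝 0) := by
    simpa using ((Real.tendsto_sqrt_atTop.comp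
      tendsto_natCast_atTop_atTop).const_div_atTop a).mul_const c
  filter_upwards [hlim.eventually (eventually_ge_nhds neg_one_lt_zero)] with n hn
  filter_upwards [hc] with x hx
  linarith [mul_le_mul_of_nonneg_left hx (by positivity : 0 ≤ a / √n)]

variable [IsProbabilityMeasure P]

theorem tendsto_pi_affineTilt_gaussianReal (hX : Measurable X) (hX2 : MemLp X 2 P)
    (hmean : ∫ x, X x ∂P = 0) {v : ℝ≥0} (hvar : ∫ x, X x ^ 2 ∂P = v) {a : ℝ}
    (ha : ∀ᶠ n : ℕ in atTop, ∀ᵐ x ∂P, 0 ≤ 1 + a / √n * X x) {s : Set ℝ} (hs : MeasurableSet s)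
    (hs_frontier : gaussianReal (a * v) v (frontier s) = 0) :
    Tendsto (fun n : ℕ => (Measure.pi fun _ : Fin n => affineTilt P X (a / √n))
      {ω | (√n)⁻¹ * ∑ i, X (ω i) ∈ s}) atTop (𝓝 (gaussianReal (a * v) v s)) := by
  have hint : Integrable X P := hX2.integrable (by norm_num)
  have hprob : ∀ᶠ n : ℕ in atTop, IsProbabilityMeasure (affineTilt P X (a / √n)) :=
    ha.mono fun n => isProbabilityMeasure_affineTilt hint hmean
  have hsum (n : ℕ) : Measurable fun ω : Fin n → Ω => (√n)⁻¹ * ∑ i, X (ω i) := by fun_prop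
  suffices Tendsto (fun n : ℕ => ((Measure.pi fun _ : Fin n => affineTilt P X (a / √n)).map
      fun ω => (√n)⁻¹ * ∑ i, X (ω i)) s) atTop (𝓝 (gaussianReal (a * v) v s)) from
    this.congr fun n => Measure.map_apply (hsum n) hs
  refine tendsto_measure_of_tendsto_charFun
    (hprob.mono fun n _ => Measure.isProbabilityMeasure_map (hsum n).aemeasurable)
    (fun t => ?_) hs_frontier
  have : IsProbabilityMeasure (P.map X) := Measure.isProbabilityMeasure_map hX.aemeasurable
  have hlim := tendsto_charFun_sub_deriv_pow (ν := P.map X) (v := v)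
    ((memLp_map_measure_iff (by fun_prop) hX.aemeasurable).2 hX2)
    (by rwa [integral_map hX.aemeasurable (by fun_prop)])
    (by rwa [integral_map hX.aemeasurable (by fun_prop)]) a t
  rw [charFun_gaussianReal]
  push_cast
  refine hlim.congr' ?_
  filter_upwards [ha, hprob] with n hn _
  rw [charFun_map_pi_const_mul_sum hX, Fintype.card_fin, charFun_map_affineTilt hint hn]

theorem tendsto_pi_affineTilt_score_test (hX : Measurable X) (hmean : ∫ x, X x ∂P = 0) {v : ℝ}
    (hv : 0 < v) (hvar : ∫ x, X x ^ 2 ∂P = v) {c : ℝ} (hc : ∀ᵐ x ∂P, c ≤ X x) {h : ℝ} (hh : 0 ≤ h)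
    (q : ℝ) :
    Tendsto (fun n : ℕ => (Measure.pi fun _ : Fin n => affineTilt P X (h / √(n * v)))
      {ω | √v * q / √n ≤ 1 / n * ∑ i, X (ω i)}) atTop
      (𝓝 (gaussianReal 0 1 (Set.Ici (q - h)))) := by
  lift v to ℝ≥0 using hv.le
  have hv0 : v ≠ 0 := by exact_mod_cast hv.ne'
  have hX2 : MemLp X 2 P := (memLp_two_iff_integrable_sq hX.aestronglyMeasurable).2
    (.of_integral_ne_zero (by rw [hvar]; exact hv.ne'))
  have hsqrt : 0 < √(v : ℝ) := Real.sqrt_pos.2 hv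
  have hquantile : (√v * q - h / √v * v) / √v = q - h := by
    rw [div_mul_comm, Real.div_sqrt, div_eq_iff hsqrt.ne']
    ring
  have := nullSingletonClass_gaussianReal (μ := h / √v * v) hv0
  have hlim := tendsto_pi_affineTilt_gaussianReal hX hX2 hmean hvar
    (eventually_nonneg_one_add_div_sqrt_mul (by positivity : 0 ≤ h / √v) hc)
    (s := Set.Ici (√v * q)) measurableSet_Ici (by simp)
  rw [gaussianReal_Ici _ _ hv0, hquantile] at hlim
  refine hlim.congr' ?_
  filter_upwards [eventually_gt_atTop 0] with n hn
  have hn' : 0 < √(n : ℝ) := by positivity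
  have hθ : h / √v / √n = h / √(n * v) := by
    rw [div_div, Real.sqrt_mul n.cast_nonneg, mul_comm]
  rw [hθ]
  congr 1 with ω
  have hmean_eq : 1 / n * ∑ i, X (ω i) = (√n)⁻¹ * (∑ i, X (ω i)) / √n := by
    rw [inv_mul_eq_div, div_div, Real.mul_self_sqrt n.cast_nonneg, one_div_mul_eq_div]
  rw [Set.mem_ofPred_eq, Set.mem_ofPred_eq, Set.mem_Ici, hmean_eq, div_le_div_iff_of_pos_right hn']

end AffineTilt

section Mixture

variable {Ω : Type*} {f f₀ f₁ : Ω → ℝ}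

/-- The score at `θ = 0` of the mixture family `(1 - θ) f₀ + θ f₁`. Division by zero makes it `-1`
where `f₀` vanishes. -/
def mixtureScore (f₀ f₁ : Ω → ℝ) (x : Ω) : ℝ := f₁ x / f₀ x - 1

lemma neg_one_le_mixtureScore {x : Ω} (h₀ : 0 ≤ f₀ x) (h₁ : 0 ≤ f₁ x) :
    -1 ≤ mixtureScore f₀ f₁ x := by
  have := div_nonneg h₁ h₀
  rw [mixtureScore]
  linarith

variable [MeasurableSpace Ω] {μ : Measure Ω}

/-- `f` is a probability density with respect to `μ`, taken nonnegative everywhere. -/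
structure IsProbDensity (μ : Measure Ω) (f : Ω → ℝ) : Prop where
  measurable : Measurable f
  nonneg : ∀ x, 0 ≤ f x
  integral_eq_one : ∫ x, f x ∂μ = 1

namespace IsProbDensity

lemma integrable (hf : IsProbDensity μ f) : Integrable f μ :=
  .of_integral_ne_zero (by simp [hf.integral_eq_one])

lemma isProbabilityMeasure (hf : IsProbDensity μ f) :
    IsProbabilityMeasure (μ.withDensity fun x => ENNReal.ofReal (f x)) :=
  isProbabilityMeasure_withDensity_ofReal (ae_of_all _ hf.nonneg) hf.integral_eq_one

lemma integral_withDensity (hf : IsProbDensity μ f) (g : Ω → ℝ) :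
    ∫ x, g x ∂(μ.withDensity fun x => ENNReal.ofReal (f x)) = ∫ x, g x * f x ∂μ := by
  rw [integral_withDensity_ofReal hf.measurable.aemeasurable (ae_of_all _ hf.nonneg)]
  simp only [smul_eq_mul, mul_comm]

end IsProbDensity

lemma mixtureScore_mul (hac : ∀ᵐ x ∂μ, f₀ x = 0 → f₁ x = 0) :
    ∀ᵐ x ∂μ, mixtureScore f₀ f₁ x * f₀ x = f₁ x - f₀ x := by
  filter_upwards [hac] with x hx
  rw [mixtureScore, sub_mul, one_mul, div_mul_cancel_of_imp hx]

lemma measurable_mixtureScore (hf₀ : Measurable f₀) (hf₁ : Measurable f₁) :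
    Measurable (mixtureScore f₀ f₁) :=
  (hf₁.div hf₀).sub_const 1

lemma integral_mixtureScore (hf₀ : IsProbDensity μ f₀) (hf₁ : IsProbDensity μ f₁)
    (hac : ∀ᵐ x ∂μ, f₀ x = 0 → f₁ x = 0) :
    ∫ x, mixtureScore f₀ f₁ x ∂(μ.withDensity fun x => ENNReal.ofReal (f₀ x)) = 0 := by
  rw [hf₀.integral_withDensity, integral_congr_ae (mixtureScore_mul hac),
    integral_sub hf₁.integrable hf₀.integrable, hf₀.integral_eq_one, hf₁.integral_eq_one, sub_self]

lemma withDensity_mixture_eq_affineTilt (hf₀ : Measurable f₀) (hf₀_nonneg : 0 ≤ f₀)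
    (hf₁ : Measurable f₁) (hac : ∀ᵐ x ∂μ, f₀ x = 0 → f₁ x = 0) (θ : ℝ) :
    μ.withDensity (fun x => ENNReal.ofReal ((1 - θ) * f₀ x + θ * f₁ x)) =
      affineTilt (μ.withDensity fun x => ENNReal.ofReal (f₀ x)) (mixtureScore f₀ f₁) θ := by
  have hscore := measurable_mixtureScore hf₀ hf₁
  rw [affineTilt, ← withDensity_mul _ (by fun_prop) (by fun_prop)]
  refine withDensity_congr_ae ?_
  filter_upwards [mixtureScore_mul hac] with x hx
  rw [Pi.mul_apply, ← ENNReal.ofReal_mul (hf₀_nonneg x)]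
  congr 1
  linear_combination -θ * hx

end Mixture

theorem stmt_1_general {Ω : Type*} [MeasurableSpace Ω] {μ : Measure Ω} {f0 f1 : Ω → ℝ}
    (hf0 : IsProbDensity μ f0) (hf1 : IsProbDensity μ f1)
    (hac : ∀ᵐ x ∂μ, f0 x = 0 → f1 x = 0)
    {σ2 : ℝ} (hσ2 : σ2 = ∫ x, (f1 x / f0 x - 1) ^ 2 * f0 x ∂μ) (hσ2pos : 0 < σ2)
    {α β : ℝ} (hαβ : α < β) (hβ : β ≤ 1)
    {qα : ℝ} (hqα : gaussianReal 0 1 (Set.Iic qα) = ENNReal.ofReal (1 - α))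
    {qβ : ℝ} (hqβ : gaussianReal 0 1 (Set.Iic qβ) = ENNReal.ofReal (1 - β))
    {θ : ℕ → ℝ} (hθ : ∀ n : ℕ, θ n = (qα - qβ) / √(n * σ2))
    {Q : (n : ℕ) → Measure (Fin n → Ω)}
    (hQ : ∀ n : ℕ, Q n = Measure.pi fun _ : Fin n =>
      μ.withDensity fun x => ENNReal.ofReal ((1 - θ n) * f0 x + θ n * f1 x))
    {S : (n : ℕ) → (Fin n → Ω) → ℝ}
    (hS : ∀ (n : ℕ) (v : Fin n → Ω), S n v = 1 / (n : ℝ) * ∑ i, (f1 (v i) / f0 (v i) - 1)) :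
    Tendsto (fun n : ℕ => (Q n {v | S n v ≥ √σ2 * qα / √n}).toReal) atTop (𝓝 β) := by
  have := hf0.isProbabilityMeasure
  have hpower := tendsto_pi_affineTilt_score_test
    (measurable_mixtureScore hf0.measurable hf1.measurable)
    (integral_mixtureScore hf0 hf1 hac) hσ2pos ((hf0.integral_withDensity _).trans hσ2.symm)
    (ae_of_all _ fun x => neg_one_le_mixtureScore (hf0.nonneg x) (hf1.nonneg x))
    (sub_nonneg.2 (le_of_measure_Iic_eq_ofReal hαβ hβ hqα hqβ)) qα
  have hlim := (ENNReal.tendsto_toReal (measure_ne_top _ _)).comp hpower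
  rw [sub_sub_cancel, ← measureReal_def, gaussianReal_real_Ici_of_Iic one_ne_zero hβ hqβ] at hlim
  refine hlim.congr fun n => ?_
  simp only [Function.comp_apply, hQ, hS, hθ, mixtureScore, ge_iff_le,
    withDensity_mixture_eq_affineTilt hf0.measurable hf0.nonneg hf1.measurable hac]

lemma IsDensityOn.isProbDensity {d : ℕ} {f : (Fin d → ℝ) → ℝ} (hf : IsDensityOn d f) :
    IsProbDensity volume f :=
  ⟨hf.1, hf.2.1, hf.2.2.2⟩

/-- under the local alternatives
`θ_n = (Φ⁻¹(1-α) - Φ⁻¹(1-β))/√(n σ²)`, the rejection probability of the test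
`S_n(𝕏) ≥ √σ² ⬝ Φ⁻¹(1-α)/√n` converges to `β`.  `Q n` is the law of an i.i.d.
sample of size `n` with density `(1-θ_n) f⁰ + θ_n f¹`, realized as a product measure. -/
theorem stmt_1
    (d : ℕ) (hd : 0 < d)
    (f0 f1 : (Fin d → ℝ) → ℝ)
    (hf0 : IsDensityOn d f0) (hf1 : IsDensityOn d f1)
    (hpos0 : ∀ x ∈ Set.Icc (0 : Fin d → ℝ) 1, 0 < f0 x)
    (hpos1 : ∀ x ∈ Set.Icc (0 : Fin d → ℝ) 1, 0 < f1 x)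
    (σ2 : ℝ)
    (hσ2int : IntegrableOn (fun x => (f1 x / f0 x - 1) ^ 2 * f0 x)
      (Set.Icc (0 : Fin d → ℝ) 1) volume)
    (hσ2 : σ2 = ∫ x in Set.Icc (0 : Fin d → ℝ) 1, (f1 x / f0 x - 1) ^ 2 * f0 x)
    (hσ2pos : 0 < σ2)
    (α β : ℝ) (hα : α ∈ Set.Ioo (0 : ℝ) 1) (hβ : β ∈ Set.Ioo (0 : ℝ) 1) (hαβ : α < β)
    (qα : ℝ) (hqα : (gaussianReal 0 1) (Set.Iic qα) = ENNReal.ofReal (1 - α))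
    (qβ : ℝ) (hqβ : (gaussianReal 0 1) (Set.Iic qβ) = ENNReal.ofReal (1 - β))
    (θ : ℕ → ℝ) (hθ : ∀ n : ℕ, θ n = (qα - qβ) / Real.sqrt (n * σ2))
    (Q : (n : ℕ) → Measure (Fin n → (Fin d → ℝ)))
    (hQ : ∀ n : ℕ, Q n = Measure.pi (fun _ : Fin n =>
      densityMeasure d (fun x => (1 - θ n) * f0 x + θ n * f1 x)))
    (S : (n : ℕ) → (Fin n → (Fin d → ℝ)) → ℝ)
    (hS : ∀ (n : ℕ) (v : Fin n → (Fin d → ℝ)),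
      S n v = (1 / (n : ℝ)) * ∑ i : Fin n, (f1 (v i) / f0 (v i) - 1)) :
    Filter.Tendsto
      (fun n : ℕ => ((Q n) {v | S n v ≥ Real.sqrt σ2 * qα / Real.sqrt n}).toReal)
      Filter.atTop (nhds β) := by
  have hac (x : Fin d → ℝ) (hx : f0 x = 0) : f1 x = 0 :=
    hf1.2.2.1 x fun hmem => (hpos0 x hmem).ne' hx
  refine stmt_1_general hf0.isProbDensity hf1.isProbDensity (ae_of_all _ hac) (hσ2.trans ?_) hσ2pos
    hαβ hβ.2.le hqα hqβ hθ hQ hS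
  exact setIntegral_eq_integral_of_forall_compl_eq_zero fun x hx => by simp [hf0.2.2.1 x hx]
end
end

section
/- Assume n¹ ≤ n⁰ and ε⁰, ε¹ ≤ 1, and assume the deterministic inequalities |N^a_k/n^a − h^a_k| ≤ √(2u h^a_k/n^a) + u/(3n^a) hold for all k ≤ K and a ∈ {0,1}. Then for a ∈ {0,1}: (i) for every k ∈ Ω^a ∪ Ω⁰¹ one has h^a_k ≤ ĥ^a_k; (ii) for every k ∉ Ω^a ∪ Ω⁰¹ one has |h^a_k − ĥ^a_k| ≤ √(10u ĥ^a_k/n^a) and |h^a_k − ĥ^a_k| ≤ 2 ĥ^a_k. (Here Ω^a denotes Ω⁰ when a = 0 and Ω¹ when a = 1.) -/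
open MeasureTheory ProbabilityTheory Filter Finset
open scoped ENNReal NNReal Classical

noncomputable section

/-- `B` is a measurable partition of `[0,1]^d` into `K` bins. -/
def IsPartitionOn (d K : ℕ) (B : Fin K → Set (Fin d → ℝ)) : Prop :=
  (∀ k, MeasurableSet (B k)) ∧ Pairwise (Function.onFun Disjoint B) ∧
    (⋃ k, B k) = Set.Icc (0 : Fin d → ℝ) 1

/-!
A Bernstein deviation `|p - h| ≤ √(2vh) + v/3` can be inverted: `√(2vh) ≤ h/2 + v` gives
`h ≤ 2p + 8v/3`. If `p ≤ τ` with `3v ≤ τ`, this is at most `3τ`. If instead `3v ≤ p`, putting it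
back under the square root gives `|h - p| ≤ 3√(vp)`, which is at most `√(10vp)` and `2p`.

Each of the two estimators thresholds its own frequency, at a level at least `3v`: membership in
`Ω¹ ∪ Ω⁰¹` only says `N¹/n¹ ≤ ε¹`, and membership in `Ω⁰ ∪ Ω⁰¹` says that `N⁰/n⁰` is at most `ε⁰`
or `ε¹`, according to whether `N¹/n¹` exceeds `ε¹`.
-/

/-- The empirical frequency `p` deviates from the true frequency `h` by at most the Bernstein bound
of scale `v`; in applications `v = u / n` for a confidence level `u` and a sample size `n`. -/
def BernsteinClose (v p h : ℝ) : Prop :=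
  |p - h| ≤ √(2 * v * h) + v / 3

lemma bernsteinClose_div_iff {u n p h : ℝ} :
    BernsteinClose (u / n) p h ↔ |p - h| ≤ √(2 * u * h / n) + u / (3 * n) := by
  rw [BernsteinClose, show 2 * (u / n) * h = 2 * u * h / n by ring, div_div, mul_comm n]

lemma sqrt_two_mul_mul_le {v h : ℝ} (hv : 0 ≤ v) (hh : 0 ≤ h) : √(2 * v * h) ≤ h / 2 + v :=
  Real.sqrt_le_iff.mpr ⟨by positivity, by linarith [sq_nonneg (h / 2 - v)]⟩

namespace BernsteinClose

variable {v p h : ℝ}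

lemma le_two_mul_add (hdev : BernsteinClose v p h) (hv : 0 ≤ v) (hh : 0 ≤ h) :
    h ≤ 2 * p + 8 / 3 * v := by
  have hlower : -(√(2 * v * h) + v / 3) ≤ p - h := (abs_le.mp hdev).1
  linarith [sqrt_two_mul_mul_le hv hh]

lemma abs_sub_le_three_mul_sqrt (hdev : BernsteinClose v p h) (hv : 0 ≤ v) (hh : 0 ≤ h)
    (hvp : 3 * v ≤ p) : |h - p| ≤ 3 * √(v * p) := by
  have hvp_nonneg : 0 ≤ v * p := mul_nonneg hv (by linarith)
  have hroot : √(2 * v * h) ≤ 5 / 2 * √(v * p) := by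
    have hhp : h ≤ 26 / 9 * p := by linarith [hdev.le_two_mul_add hv hh]
    refine Real.sqrt_le_iff.mpr ⟨by positivity, ?_⟩
    calc 2 * v * h ≤ 2 * v * (26 / 9 * p) := by gcongr
      _ ≤ (5 / 2) ^ 2 * (v * p) := by linarith
      _ = (5 / 2 * √(v * p)) ^ 2 := by rw [mul_pow, Real.sq_sqrt hvp_nonneg]
  have hscale : v ≤ √(v * p) := Real.le_sqrt_of_sq_le (by nlinarith)
  calc |h - p| = |p - h| := abs_sub_comm h p
    _ ≤ √(2 * v * h) + v / 3 := hdev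
    _ ≤ 3 * √(v * p) := by linarith

end BernsteinClose

lemma three_mul_sqrt_le_sqrt_ten_mul (x : ℝ) : 3 * √x ≤ √(10 * x) := by
  rw [Real.sqrt_mul (by norm_num)]
  gcongr
  exact Real.le_sqrt_of_sq_le (by norm_num)

lemma three_mul_sqrt_mul_le_two_mul {v p : ℝ} (hp : 0 ≤ p) (hvp : 3 * v ≤ p) :
    3 * √(v * p) ≤ 2 * p := by
  have hroot : √(v * p) ≤ 2 / 3 * p := Real.sqrt_le_iff.mpr ⟨by positivity, by nlinarith⟩
  linarith

theorem thresholded_histogram_bounds {ι : Type*} [DecidableEq ι] {u n : ℝ}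
    {N h hhat τ : ι → ℝ} {S : Finset ι} (hu : 0 ≤ u) (hn : 0 < n) (hh : ∀ k, 0 ≤ h k)
    (hτ : ∀ k, 3 * u / n ≤ τ k) (hS : ∀ k, k ∈ S ↔ N k / n ≤ τ k)
    (hhhat : ∀ k, hhat k = if k ∈ S then 3 * τ k else N k / n)
    (hdev : ∀ k, |N k / n - h k| ≤ √(2 * u * h k / n) + u / (3 * n)) :
    (∀ k ∈ S, h k ≤ hhat k) ∧
    ∀ k, k ∉ S → |h k - hhat k| ≤ √(10 * u * hhat k / n) ∧ |h k - hhat k| ≤ 2 * hhat k := by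
  have hv : 0 ≤ u / n := by positivity
  have hvτ k : 3 * (u / n) ≤ τ k := by simpa only [mul_div_assoc] using hτ k
  have hclose k : BernsteinClose (u / n) (N k / n) (h k) := bernsteinClose_div_iff.mpr (hdev k)
  refine ⟨fun k hk ↦ ?_, fun k hk ↦ ?_⟩
  · rw [hhhat, if_pos hk]
    linarith [(hclose k).le_two_mul_add hv (hh k), (hS k).mp hk, hvτ k]
  · have hvp : 3 * (u / n) ≤ N k / n := (hvτ k).trans (not_le.mp (mt (hS k).mpr hk)).le
    have herror := (hclose k).abs_sub_le_three_mul_sqrt hv (hh k) hvp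
    rw [hhhat, if_neg hk, show 10 * u * (N k / n) / n = 10 * (u / n * (N k / n)) by ring]
    exact ⟨herror.trans (three_mul_sqrt_le_sqrt_ten_mul _),
      herror.trans (three_mul_sqrt_mul_le_two_mul (by linarith) hvp)⟩

lemma IsDensityOn.setIntegral_nonneg {d : ℕ} {f : (Fin d → ℝ) → ℝ} (hf : IsDensityOn d f)
    (s : Set (Fin d → ℝ)) : 0 ≤ ∫ x in s, f x :=
  integral_nonneg hf.2.1

theorem stmt_14_general {ι : Type*} [DecidableEq ι] {n0 n1 u ε0 ε1 : ℝ}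
    {h0 h1 N0 N1 h0hat h1hat : ι → ℝ} {Om0 Om01 Om1 : Finset ι}
    (hn1 : 0 < n1) (hn10 : n1 ≤ n0) (hu : 0 ≤ u)
    (hh0 : ∀ k, 0 ≤ h0 k) (hh1 : ∀ k, 0 ≤ h1 k)
    (hε0 : 3 * u / n0 ≤ ε0) (hε1 : 3 * u / n1 ≤ ε1)
    (hOm0 : ∀ k, k ∈ Om0 ↔ (ε1 < N1 k / n1 ∧ N0 k / n0 ≤ ε0))
    (hOm01 : ∀ k, k ∈ Om01 ↔ (N1 k / n1 ≤ ε1 ∧ N0 k / n0 ≤ ε1))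
    (hOm1 : ∀ k, k ∈ Om1 ↔ (N1 k / n1 ≤ ε1 ∧ ε1 < N0 k / n0))
    (hh0hat : ∀ k, h0hat k =
      if k ∈ Om0 then 3 * ε0 else if k ∈ Om01 then 3 * ε1 else N0 k / n0)
    (hh1hat : ∀ k, h1hat k = if k ∈ Om1 ∪ Om01 then 3 * ε1 else N1 k / n1)
    (hdev0 : ∀ k, |N0 k / n0 - h0 k| ≤ √(2 * u * h0 k / n0) + u / (3 * n0))
    (hdev1 : ∀ k, |N1 k / n1 - h1 k| ≤ √(2 * u * h1 k / n1) + u / (3 * n1)) :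
    (∀ k ∈ Om0 ∪ Om01, h0 k ≤ h0hat k) ∧
    (∀ k ∈ Om1 ∪ Om01, h1 k ≤ h1hat k) ∧
    (∀ k, k ∉ Om0 ∪ Om01 →
      |h0 k - h0hat k| ≤ √(10 * u * h0hat k / n0) ∧ |h0 k - h0hat k| ≤ 2 * h0hat k) ∧
    (∀ k, k ∉ Om1 ∪ Om01 →
      |h1 k - h1hat k| ≤ √(10 * u * h1hat k / n1) ∧ |h1 k - h1hat k| ≤ 2 * h1hat k) := by
  let τ0 k := if ε1 < N1 k / n1 then ε0 else ε1
  have hτ0 k : 3 * u / n0 ≤ τ0 k := by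
    have hn0ε1 : 3 * u / n0 ≤ ε1 :=
      (div_le_div_of_nonneg_left (by positivity) hn1 hn10).trans hε1
    unfold τ0
    split_ifs
    exacts [hε0, hn0ε1]
  have hmem0 k : k ∈ Om0 ∪ Om01 ↔ N0 k / n0 ≤ τ0 k := by grind
  have hmem1 k : k ∈ Om1 ∪ Om01 ↔ N1 k / n1 ≤ ε1 := by grind
  have hhat0 k : h0hat k = if k ∈ Om0 ∪ Om01 then 3 * τ0 k else N0 k / n0 := by grind
  obtain ⟨hupper0, herror0⟩ :=
    thresholded_histogram_bounds hu (hn1.trans_le hn10) hh0 hτ0 hmem0 hhat0 hdev0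
  obtain ⟨hupper1, herror1⟩ :=
    thresholded_histogram_bounds hu hn1 hh1 (fun _ ↦ hε1) hmem1 hh1hat hdev1
  exact ⟨hupper0, hupper1, herror0, herror1⟩

/-- deterministic error bounds for the thresholded histogram estimators,
under the Bernstein-type deviation inequalities on the empirical frequencies:
(i) on thresholded bins `h^a_k ≤ ĥ^a_k`; (ii) on the other bins
`|h^a_k − ĥ^a_k| ≤ √(10u ĥ^a_k/n^a)` and `|h^a_k − ĥ^a_k| ≤ 2ĥ^a_k`. -/
theorem stmt_14
    (d K n n0 n1 : ℕ) (hd : 0 < d) (hK : 0 < K) (hn : 0 < n) (hn0 : 0 < n0) (hn1 : 0 < n1)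
    (hn10 : n1 ≤ n0)
    (f0 f1 : (Fin d → ℝ) → ℝ) (hf0 : IsDensityOn d f0) (hf1 : IsDensityOn d f1)
    (B : Fin K → Set (Fin d → ℝ)) (hB : IsPartitionOn d K B)
    (h0 h1 : Fin K → ℝ)
    (hh0 : ∀ k, h0 k = ∫ x in B k, f0 x) (hh1 : ∀ k, h1 k = ∫ x in B k, f1 x)
    (N0 N1 : Fin K → ℝ) (hN0pos : ∀ k, 0 ≤ N0 k) (hN1pos : ∀ k, 0 ≤ N1 k)
    (u t : ℝ) (hu : 0 < u) (ht : 0 < t)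
    (ε0 ε1 : ℝ) (hε0 : ε0 = max (3 * u / n0) (t / n)) (hε1 : ε1 = Real.sqrt (3 * u / n1))
    (hε0le : ε0 ≤ 1) (hε1le : ε1 ≤ 1)
    (Om0 Om01 Om1 : Finset (Fin K))
    (hOm0 : ∀ k, k ∈ Om0 ↔ (ε1 < N1 k / n1 ∧ N0 k / n0 ≤ ε0))
    (hOm01 : ∀ k, k ∈ Om01 ↔ (N1 k / n1 ≤ ε1 ∧ N0 k / n0 ≤ ε1))
    (hOm1 : ∀ k, k ∈ Om1 ↔ (N1 k / n1 ≤ ε1 ∧ ε1 < N0 k / n0))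
    (h0hat h1hat : Fin K → ℝ)
    (hh0hat : ∀ k, h0hat k =
      if k ∈ Om0 then 3 * ε0 else if k ∈ Om01 then 3 * ε1 else N0 k / n0)
    (hh1hat : ∀ k, h1hat k = if k ∈ Om1 ∪ Om01 then 3 * ε1 else N1 k / n1)
    (hdev0 : ∀ k, |N0 k / n0 - h0 k| ≤ Real.sqrt (2 * u * h0 k / n0) + u / (3 * n0))
    (hdev1 : ∀ k, |N1 k / n1 - h1 k| ≤ Real.sqrt (2 * u * h1 k / n1) + u / (3 * n1)) :
    (∀ k ∈ Om0 ∪ Om01, h0 k ≤ h0hat k) ∧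
    (∀ k ∈ Om1 ∪ Om01, h1 k ≤ h1hat k) ∧
    (∀ k, k ∉ Om0 ∪ Om01 →
      |h0 k - h0hat k| ≤ Real.sqrt (10 * u * h0hat k / n0) ∧
      |h0 k - h0hat k| ≤ 2 * h0hat k) ∧
    (∀ k, k ∉ Om1 ∪ Om01 →
      |h1 k - h1hat k| ≤ Real.sqrt (10 * u * h1hat k / n1) ∧
      |h1 k - h1hat k| ≤ 2 * h1hat k) := by
  exact stmt_14_general (Nat.cast_pos.mpr hn1) (Nat.cast_le.mpr hn10) hu.le
    (fun k ↦ hh0 k ▸ hf0.setIntegral_nonneg _) (fun k ↦ hh1 k ▸ hf1.setIntegral_nonneg _)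
    (hε0 ▸ le_max_left _ _) (hε1 ▸ Real.le_sqrt_self_iff.mpr (Real.sqrt_le_one.mp (hε1 ▸ hε1le)))
    hOm0 hOm01 hOm1 hh0hat hh1hat hdev0 hdev1
end
end

section
/- Let u > 0, let m > 0 be a real number, and let h ≥ 0 and ν ≥ 0 be real numbers. If |ν − h| ≤ √(2uh/m) + u/(3m), then ν − √(2uν/m) ≤ h ≤ ν + √(2uν/m) + 3u/m. -/
/-!
Put `b = 2u/m`. The lower bound is a completed square: `√(bh) + b/4` exceeds the allowed deviation,
and `h + √(bh) + b/4 = (√h + √b/2)²`, so `√ν ≤ √h + √b/2`. For the upper bound,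
`h ≤ ν + √(bh) + e` is a quadratic inequality in `√h`, and it forces
`√b · √h ≤ √b · √ν + b + e`; feeding this back into the inequality costs `b + 2e`, which
is `8u/(3m)` for `e = u/(3m)`.
-/

/-- If `√b * √x` exceeded the bound, then `w = √x - √y - √b` would satisfy `√b * w > e`, whereas
`x - √b * √x = (√y + √b + w) * (√y + w) ≥ y + √b * w`. -/
lemma sqrt_mul_le_of_le_add_sqrt_mul_add {b x y e : ℝ} (hb : 0 ≤ b) (hx : 0 ≤ x) (hy : 0 ≤ y)
    (he : 0 ≤ e) (hxy : x ≤ y + √(b * x) + e) : √(b * x) ≤ √(b * y) + b + e := by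
  rw [Real.sqrt_mul hb] at hxy ⊢
  rw [Real.sqrt_mul hb]
  by_contra! hlt
  obtain ⟨w, hw⟩ : ∃ w, √x = √y + √b + w := ⟨√x - √y - √b, by ring⟩
  have hew : e < √b * w := by
    rw [hw] at hlt
    linarith [Real.mul_self_sqrt hb]
  have hw_pos : 0 < w := pos_of_mul_pos_right (he.trans_lt hew) (Real.sqrt_nonneg b)
  have hexpand : x - √b * √x = y + 2 * (√y * w) + √b * √y + √b * w + w ^ 2 := by
    nth_rewrite 1 [← Real.sq_sqrt hx, ← Real.sq_sqrt hy]
    rw [hw]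
    ring
  have hyw : 0 ≤ √y * w := by positivity
  have hby : 0 ≤ √b * √y := by positivity
  linarith [sq_nonneg w]

lemma le_add_sqrt_mul_add_of_le_add_sqrt_mul_add {b x y e : ℝ} (hb : 0 ≤ b) (hx : 0 ≤ x)
    (hy : 0 ≤ y) (he : 0 ≤ e) (hxy : x ≤ y + √(b * x) + e) :
    x ≤ y + √(b * y) + (b + 2 * e) := by
  linarith [sqrt_mul_le_of_le_add_sqrt_mul_add hb hx hy he hxy]

lemma sqrt_le_sqrt_add_sqrt_div_two {b x y : ℝ} (hb : 0 ≤ b) (hx : 0 ≤ x)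
    (hyx : y ≤ x + √(b * x) + b / 4) : √y ≤ √x + √b / 2 := by
  refine Real.sqrt_le_iff.2 ⟨by positivity, hyx.trans_eq ?_⟩
  calc x + √(b * x) + b / 4 = √x ^ 2 + √b * √x + √b ^ 2 / 4 := by
        rw [Real.sqrt_mul hb, Real.sq_sqrt hx, Real.sq_sqrt hb]
    _ = (√x + √b / 2) ^ 2 := by ring

lemma sub_sqrt_mul_le_of_le_add_sqrt_mul_add {b x y : ℝ} (hb : 0 ≤ b) (hx : 0 ≤ x) (hy : 0 ≤ y)
    (hyx : y ≤ x + √(b * x) + b / 4) : y - √(b * y) ≤ x := by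
  rcases le_total y b with hyb | hby
  · have hle : y ≤ √(b * y) := Real.le_sqrt_of_sq_le (by nlinarith)
    linarith
  · have hsqrt : √y - √b / 2 ≤ √x :=
      sub_le_iff_le_add.2 (sqrt_le_sqrt_add_sqrt_div_two hb hx hyx)
    have hnonneg : 0 ≤ √y - √b / 2 := by
      linarith [Real.sqrt_le_sqrt hby, Real.sqrt_nonneg b]
    calc y - √(b * y) = √y ^ 2 - √b * √y := by rw [Real.sqrt_mul hb, Real.sq_sqrt hy]
      _ ≤ (√y - √b / 2) ^ 2 := by linarith [sq_nonneg (√b / 2)]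
      _ ≤ √x ^ 2 := pow_le_pow_left₀ hnonneg hsqrt 2
      _ = x := Real.sq_sqrt hx

/-- deterministic inversion of the Bernstein-type deviation bound.
If the empirical frequency `ν` of a bin (out of `m` samples) deviates from the true
probability `h` by at most `√(2uh/m) + u/(3m)`, then
`ν − √(2uν/m) ≤ h ≤ ν + √(2uν/m) + 3u/m`. -/
theorem stmt_18
    (u m h ν : ℝ) (hu : 0 < u) (hm : 0 < m) (hh : 0 ≤ h) (hν : 0 ≤ ν)
    (hdev : |ν - h| ≤ Real.sqrt (2 * u * h / m) + u / (3 * m)) :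
    ν - Real.sqrt (2 * u * ν / m) ≤ h ∧
      h ≤ ν + Real.sqrt (2 * u * ν / m) + 3 * u / m := by
  have hb : 0 ≤ 2 * u / m := by positivity
  have he : 0 ≤ u / (3 * m) := by positivity
  have hdiv (x : ℝ) : 2 * u * x / m = 2 * u / m * x := mul_div_right_comm _ _ _
  have hlower : u / (3 * m) ≤ 2 * u / m / 4 := by
    field_simp
    norm_num
  have hupper : 2 * u / m + 2 * (u / (3 * m)) ≤ 3 * u / m := by
    field_simp
    norm_num
  rw [hdiv, abs_le] at hdev
  rw [hdiv]
  constructor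
  · exact sub_sqrt_mul_le_of_le_add_sqrt_mul_add hb hh hν (by linarith)
  · linarith [le_add_sqrt_mul_add_of_le_add_sqrt_mul_add (e := u / (3 * m)) hb hh hν he
      (by linarith)]
end
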